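/- Precision guarantee for single-program cost bounds: let a transition system with states S, total successor relation step, terminal set Term (terminal states only step to themselves), initial set Init, and cost valuation c : S → ℤ be terminating, let φ be a potential function and χ an anti-potential function for it, and let p ∈ ℝ satisfy φ(s) − χ(s) ≤ p for every initial state s ∈ Init. Then for every initial state s and every run ρ from s: 0 ≤ Cost(ρ) − χ(s) ≤ p and 0 ≤ φ(s) − Cost(ρ) ≤ p; that is, p bounds the precision of the upper cost bound φ and of the lower cost bound χ. -/

import Mathlib

/-- A run of the transition system from state `s`. -/
def IsRun {S : Type*} (step : S → S → Prop) (s : S) (ρ : ℕ → S) : Prop :=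
  ρ 0 = s ∧ ∀ n, step (ρ n) (ρ (n + 1))

/-- `s'` is reachable from `s`. -/
def ReachableFrom {S : Type*} (step : S → S → Prop) (s s' : S) : Prop :=
  ∃ ρ n, IsRun step s ρ ∧ ρ n = s'

/-- `s'` is reachable from some initial state in `Init`. -/
def Reachable {S : Type*} (step : S → S → Prop) (Init : Set S) (s' : S) : Prop :=
  ∃ s ∈ Init, ReachableFrom step s s'

/-- The system is terminating: every run from a reachable state visits a terminal state. -/
def Terminating {S : Type*} (step : S → S → Prop) (Term Init : Set S) : Prop :=
  ∀ s, Reachable step Init s → ∀ ρ, IsRun step s ρ → ∃ n, ρ n ∈ Term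

/-- The cost of a run: `c (ρ N) - c (ρ 0)` where `N` is the least index with `ρ N ∈ Term`. -/
noncomputable def RunCost {S : Type*} (Term : Set S) (c : S → ℤ) (ρ : ℕ → S) : ℤ :=
  c (ρ (sInf {n | ρ n ∈ Term})) - c (ρ 0)

/-- Potential function: sufficiency preservation and sufficiency on termination. -/
def IsPF {S : Type*} (step : S → S → Prop) (Term Init : Set S) (c : S → ℤ)
    (φ : S → ℝ) : Prop :=
  (∀ s s', Reachable step Init s → step s s' →
    φ s ≥ φ s' + ((c s' : ℝ) - (c s : ℝ))) ∧
  (∀ s, Reachable step Init s → s ∈ Term → φ s ≥ 0)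

/-- Anti-potential function: insufficiency preservation and insufficiency on termination. -/
def IsAntiPF {S : Type*} (step : S → S → Prop) (Term Init : Set S) (c : S → ℤ)
    (χ : S → ℝ) : Prop :=
  (∀ s s', Reachable step Init s → step s s' →
    χ s ≤ χ s' + ((c s' : ℝ) - (c s : ℝ))) ∧
  (∀ s, Reachable step Init s → s ∈ Term → χ s ≤ 0)

/-- Every state visited by a run from an initial state is reachable. -/
theorem IsRun.reachable {S : Type*} {step : S → S → Prop} {Init : Set S} {s : S} {ρ : ℕ → S}
    (hρ : IsRun step s ρ) (hs : s ∈ Init) (n : ℕ) : Reachable step Init (ρ n) :=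
  ⟨s, hs, ρ, n, hρ, rfl⟩

/-- Along a run, a potential function pays for the cost accumulated so far. -/
theorem IsPF.add_cost_le {S : Type*} {step : S → S → Prop} {Term Init : Set S} {c : S → ℤ}
    {φ : S → ℝ} (hφ : IsPF step Term Init c φ) {s : S} (hs : s ∈ Init) {ρ : ℕ → S}
    (hρ : IsRun step s ρ) (n : ℕ) :
    φ (ρ n) + ((c (ρ n) : ℝ) - (c (ρ 0) : ℝ)) ≤ φ s := by
  induction n with
  | zero => simp [hρ.1]
  | succ n ih => linarith [hφ.1 _ _ (hρ.reachable hs n) (hρ.2 n)]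

/-- The negation of an anti-potential function is a potential function for the negated cost. -/
theorem IsAntiPF.neg {S : Type*} {step : S → S → Prop} {Term Init : Set S} {c : S → ℤ}
    {χ : S → ℝ} (hχ : IsAntiPF step Term Init c χ) : IsPF step Term Init (-c) (-χ) := by
  refine ⟨fun s s' hs h => ?_, fun s hs h => ?_⟩
  · have := hχ.1 s s' hs h
    simp only [Pi.neg_apply, Int.cast_neg]
    linarith
  · simpa using hχ.2 s hs h

/-- A potential function bounds the cost of every run that visits a terminal state. -/
theorem IsPF.runCost_le {S : Type*} {step : S → S → Prop} {Term Init : Set S} {c : S → ℤ}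
    {φ : S → ℝ} (hφ : IsPF step Term Init c φ) {s : S} (hs : s ∈ Init) {ρ : ℕ → S}
    (hρ : IsRun step s ρ) (hT : ∃ n, ρ n ∈ Term) : (RunCost Term c ρ : ℝ) ≤ φ s := by
  have hmem : ρ (sInf {n | ρ n ∈ Term}) ∈ Term := Nat.sInf_mem hT
  have hnonneg := hφ.2 _ (hρ.reachable hs _) hmem
  have hcost := hφ.add_cost_le hs hρ (sInf {n | ρ n ∈ Term})
  rw [RunCost, Int.cast_sub]
  linarith

/-- Negating the cost valuation negates the cost of a run. -/
theorem runCost_neg {S : Type*} (Term : Set S) (c : S → ℤ) (ρ : ℕ → S) :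
    RunCost Term (-c) ρ = -RunCost Term c ρ := by
  simp only [RunCost, Pi.neg_apply]
  ring

/-- precision guarantee for single-program cost bounds. -/
theorem pf_antipf_precision_guarantee {S : Type*}
    (step : S → S → Prop) (Term Init : Set S) (c : S → ℤ)
    (htotal : ∀ s : S, ∃ s', step s s')
    (hTerm : ∀ s ∈ Term, ∀ s', step s s' → s' = s)
    (hterminating : Terminating step Term Init)
    (φ : S → ℝ) (hφ : IsPF step Term Init c φ)
    (χ : S → ℝ) (hχ : IsAntiPF step Term Init c χ)
    (p : ℝ) (hp : ∀ s ∈ Init, φ s - χ s ≤ p)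
    (s : S) (hs : s ∈ Init)
    (ρ : ℕ → S) (hρ : IsRun step s ρ) :
    (0 ≤ (RunCost Term c ρ : ℝ) - χ s ∧ (RunCost Term c ρ : ℝ) - χ s ≤ p) ∧
    (0 ≤ φ s - (RunCost Term c ρ : ℝ) ∧ φ s - (RunCost Term c ρ : ℝ) ≤ p) := by
  have hT : ∃ n, ρ n ∈ Term := hterminating s (hρ.1 ▸ hρ.reachable hs 0) ρ hρ
  have hupper := hφ.runCost_le hs hρ hT
  have hlower := hχ.neg.runCost_le hs hρ hT
  rw [runCost_neg, Int.cast_neg, Pi.neg_apply] at hlower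
  have hgap := hp s hs
  refine ⟨⟨?_, ?_⟩, ?_, ?_⟩ <;> linarith
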